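/- Let α, β, c_f > 0, q_min < q_max, and let p : Fin (n+1) → ℝ be a monotone nondecreasing partition with p 0 = q_min and p n = q_max. Let d_0, …, d_{m−1} > 0 be edge lengths along a path, and let q_0, …, q_m ∈ [q_min, q_max] be charges satisfying the feasibility condition q_{k+1} ≤ min(q_max, q_k + β d_k) for every k < m. Then there exist partition indices i_0, …, i_m with q_k ∈ [p(i_k), p(i_k + 1)] for every k, such that for every k < m the relaxed edge with departure charge p(i_k + 1) and arrival charge p(i_{k+1}) is feasible (i.e., p(i_{k+1}) ≤ min(q_max, p(i_k + 1) + β d_k)), and the total relaxed cost satisfies Σ_{k<m} c_f·d_k·max(0, (p(i_{k+1}) − p(i_k + 1) + α d_k)/((α + β) d_k)) ≤ Σ_{k<m} c_f·d_k·max(0, (q_{k+1} − q_k + α d_k)/((α + β) d_k)). That is, every feasible solution of the original problem P1 induces a feasible solution of the relaxed problem P3 on the same vertex sequence with cost no larger. -/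

import Mathlib

/-!
The fuel cost of an edge is nondecreasing in its arrival charge and nonincreasing in its departure
charge, and feasibility survives raising the departure charge or lowering the arrival charge.
Hence *any* choice of sub-intervals containing the charges of a feasible solution yields a
feasible relaxed solution that is no more expensive. Such a choice exists by a discrete
intermediate value argument: a finite sequence cannot pass from one side of a value to the other
without two consecutive terms bracketing it.
-/

theorem exists_mem_Icc_castSucc_succ {X : Type*} [LinearOrder X] {n : ℕ} [NeZero n]
    (p : Fin (n + 1) → X) {x : X} (hx : x ∈ Set.Icc (p 0) (p (Fin.last n))) :
    ∃ j : Fin n, x ∈ Set.Icc (p j.castSucc) (p j.succ) := by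
  by_contra! not_mem
  have le_x : ∀ j, p j ≤ x :=
    Fin.induction hx.1 fun j hj ↦ (lt_of_not_ge fun hj' ↦ not_mem j ⟨hj, hj'⟩).le
  obtain ⟨n, rfl⟩ := Nat.exists_eq_succ_of_ne_zero (NeZero.ne n)
  exact not_mem (Fin.last n) ⟨le_x _, hx.2⟩

section Edge

variable {K : Type*} [Field K] [LinearOrder K]

/-- Feasibility of an edge of length `d` with departure charge `a` and arrival charge `b`: running
on gasoline throughout yields at least `b`, within the capacity `qmax`. There is no lower
constraint on `b`, so surplus charge may be discarded. -/
def IsFeasibleEdge (β qmax d a b : K) : Prop :=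
  b ≤ min qmax (a + β * d)

/-- The fuel cost `c(a, b)` of an edge of length `d` with departure charge `a` and arrival charge
`b`. The truncated quotient is the fraction of the edge driven in gasoline mode; it is meaningful
for `(α + β) * d ≠ 0`, and division by zero makes the cost `0` otherwise. -/
def fuelCost (α β cf d a b : K) : K :=
  cf * d * max 0 ((b - a + α * d) / ((α + β) * d))

variable [IsStrictOrderedRing K] {α β cf qmax d a a' b b' : K}

theorem IsFeasibleEdge.mono (h : IsFeasibleEdge β qmax d a b) (ha : a ≤ a') (hb : b' ≤ b) :
    IsFeasibleEdge β qmax d a' b' :=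
  calc
    b' ≤ b := hb
    _ ≤ min qmax (a + β * d) := h
    _ ≤ min qmax (a' + β * d) := by gcongr

theorem fuelCost_le_fuelCost (hαβ : 0 ≤ α + β) (hcf : 0 ≤ cf) (hd : 0 ≤ d)
    (ha : a ≤ a') (hb : b' ≤ b) :
    fuelCost α β cf d a' b' ≤ fuelCost α β cf d a b := by
  unfold fuelCost
  gcongr

end Edge

theorem relaxation_dominates_feasible_solution_general
    {K : Type*} [Field K] [LinearOrder K] [IsStrictOrderedRing K]
    {α β cf qmax : K} (hαβ : 0 < α + β) (hcf : 0 ≤ cf)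
    {n m : ℕ} [NeZero n] (p : Fin (n + 1) → K)
    {d : Fin m → K} (hd : ∀ k, 0 < d k)
    {q : Fin (m + 1) → K} (hq : ∀ k, q k ∈ Set.Icc (p 0) (p (Fin.last n)))
    (hfeas : ∀ k : Fin m, IsFeasibleEdge β qmax (d k) (q k.castSucc) (q k.succ)) :
    ∃ i : Fin (m + 1) → Fin n,
      (∀ k, q k ∈ Set.Icc (p (i k).castSucc) (p (i k).succ)) ∧
      (∀ k : Fin m,
        IsFeasibleEdge β qmax (d k) (p (i k.castSucc).succ) (p (i k.succ).castSucc)) ∧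
      ∑ k : Fin m, fuelCost α β cf (d k) (p (i k.castSucc).succ) (p (i k.succ).castSucc) ≤
        ∑ k : Fin m, fuelCost α β cf (d k) (q k.castSucc) (q k.succ) := by
  choose i hi using fun k ↦ exists_mem_Icc_castSucc_succ p (hq k)
  have departure_le (k : Fin m) : q k.castSucc ≤ p (i k.castSucc).succ := (hi k.castSucc).2
  have le_arrival (k : Fin m) : p (i k.succ).castSucc ≤ q k.succ := (hi k.succ).1
  exact ⟨i, hi, fun k ↦ (hfeas k).mono (departure_le k) (le_arrival k),
    Finset.sum_le_sum fun k _ ↦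
      fuelCost_le_fuelCost hαβ.le hcf (hd k).le (departure_le k) (le_arrival k)⟩

/-- Given a monotone partition `p` of `[q_min, q_max]` into `n` sub-intervals,
edge lengths `d_k > 0` and charges `q_0, …, q_m ∈ [q_min, q_max]` satisfying the feasibility
condition `q_{k+1} ≤ min(q_max, q_k + β d_k)`, there exist partition indices `i_0, …, i_m`
with `q_k ∈ [p(i_k), p(i_k + 1)]` such that every relaxed edge (departure charge
`p(i_k + 1)`, arrival charge `p(i_{k+1})`) is feasible and the total relaxed cost is at most
the original cost.  Thus every feasible solution of P1 induces a P3-feasible solution on the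
same vertex sequence with cost no larger. -/
theorem relaxation_dominates_feasible_solution
    (α β cf qmin qmax : ℝ) (hα : 0 < α) (hβ : 0 < β) (hcf : 0 < cf)
    (hq' : qmin < qmax)
    (n m : ℕ) (p : Fin (n + 1) → ℝ) (hp : Monotone p)
    (hp0 : p 0 = qmin) (hpn : p (Fin.last n) = qmax)
    (d : Fin m → ℝ) (hd : ∀ k, 0 < d k)
    (q : Fin (m + 1) → ℝ) (hq : ∀ k, q k ∈ Set.Icc qmin qmax)
    (hfeas : ∀ k : Fin m, q k.succ ≤ min qmax (q k.castSucc + β * d k)) :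
    ∃ i : Fin (m + 1) → Fin n,
      (∀ k, q k ∈ Set.Icc (p (i k).castSucc) (p (i k).succ)) ∧
      (∀ k : Fin m,
        p (i k.succ).castSucc ≤ min qmax (p (i k.castSucc).succ + β * d k)) ∧
      (∑ k : Fin m, cf * d k *
          max 0 ((p (i k.succ).castSucc - p (i k.castSucc).succ + α * d k) /
            ((α + β) * d k))) ≤
        ∑ k : Fin m, cf * d k *
          max 0 ((q k.succ - q k.castSucc + α * d k) / ((α + β) * d k)) := by
  subst hp0 hpn
  have : NeZero n := ⟨by rintro rfl; exact hq'.ne rfl⟩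
  exact relaxation_dominates_feasible_solution_general (add_pos hα hβ) hcf.le p hd hq hfeas
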